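/- Let ℓ be a prime, m ≥ 0 and n ≥ 1 integers. For i = 1, 2 let u_i = (diag(ℓ^{a_i+b_i}, ℓ^{b_i}, ℓ^{a_i}, 1), diag(ℓ^{d_i}, ℓ^{c_i})) ∈ G(ℚ_ℓ), where a_i, b_i, c_i, d_i are integers with b_i ≥ a_i ≥ 0, d_i ≥ c_i ≥ 0 and a_i + b_i = c_i + d_i. Then B_{m,n} · u₁ · B_{m,n} · u₂ · B_{m,n} = B_{m,n} · u₁u₂ · B_{m,n}, and the number of left B_{m,n}-cosets contained in B_{m,n} · u₁u₂ · B_{m,n} is finite and equals the product of the numbers of left B_{m,n}-cosets contained in B_{m,n} · u₁ · B_{m,n} and in B_{m,n} · u₂ · B_{m,n}. -/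

import Mathlib

open Pointwise

noncomputable section

/-- The ambient ring containing `G(ℚ_ℓ) = (GSp₄ ×_{GL₁} GL₂)(ℚ_ℓ)`:
pairs of a 4×4 and a 2×2 matrix over `ℚ_ℓ`. -/
abbrev MG (p : ℕ) [Fact p.Prime] :=
  Matrix (Fin 4) (Fin 4) ℚ_[p] × Matrix (Fin 2) (Fin 2) ℚ_[p]

/-- The standard skew-symmetric matrix `J` defining `GSp₄`. -/
def Jmat (p : ℕ) [Fact p.Prime] : Matrix (Fin 4) (Fin 4) ℚ_[p] :=
  !![0, 0, 0, 1; 0, 0, 1, 0; 0, -1, 0, 0; -1, 0, 0, 0]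

/-- `G(ℤ_ℓ)`: pairs `(g, h)` with `g ∈ GSp₄(ℤ_ℓ)`, `h ∈ GL₂(ℤ_ℓ)` and
`μ(g) = det h`. -/
def GZ (p : ℕ) [Fact p.Prime] : Set (MG p) :=
  {x | (∀ i j, ‖x.1 i j‖ ≤ 1) ∧ (∀ i j, ‖x.2 i j‖ ≤ 1) ∧
    ‖x.1.det‖ = 1 ∧ ‖x.2.det‖ = 1 ∧
    x.1.transpose * Jmat p * x.1 = x.2.det • Jmat p}

/-- The subgroup `B_{m,n}` of `G(ℤ_ℓ)`: pairs `(g, h)` with `μ(g) ≡ 1 (mod ℓ^m)`, the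
entries of `g` below the diagonal divisible by `ℓⁿ`, the (4,4)-entry of `g` `≡ 1 (mod ℓⁿ)`,
and the (2,1)-entry of `h` divisible by `ℓⁿ`. -/
def Bmn (p : ℕ) [Fact p.Prime] (m n : ℕ) : Set (MG p) :=
  {x ∈ GZ p | ‖x.2.det - 1‖ ≤ (p : ℝ) ^ (-(m : ℤ)) ∧
    ‖x.1 1 0‖ ≤ (p : ℝ) ^ (-(n : ℤ)) ∧ ‖x.1 2 0‖ ≤ (p : ℝ) ^ (-(n : ℤ)) ∧
    ‖x.1 2 1‖ ≤ (p : ℝ) ^ (-(n : ℤ)) ∧ ‖x.1 3 0‖ ≤ (p : ℝ) ^ (-(n : ℤ)) ∧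
    ‖x.1 3 1‖ ≤ (p : ℝ) ^ (-(n : ℤ)) ∧ ‖x.1 3 2‖ ≤ (p : ℝ) ^ (-(n : ℤ)) ∧
    ‖x.1 3 3 - 1‖ ≤ (p : ℝ) ^ (-(n : ℤ)) ∧ ‖x.2 1 0‖ ≤ (p : ℝ) ^ (-(n : ℤ))}

/-- The element `u = (diag(ℓ^{a+b}, ℓ^b, ℓ^a, 1), diag(ℓ^d, ℓ^c))` of `G(ℚ_ℓ)`. -/
def vElt (p : ℕ) [Fact p.Prime] (a b c d : ℕ) : MG p :=
  (Matrix.diagonal ![(p : ℚ_[p]) ^ (a + b), (p : ℚ_[p]) ^ b, (p : ℚ_[p]) ^ a, 1],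
    Matrix.diagonal ![(p : ℚ_[p]) ^ d, (p : ℚ_[p]) ^ c])

/-- The set of left `V`-cosets meeting a subset `S` of `G(ℚ_ℓ)`. -/
def lcosets (p : ℕ) [Fact p.Prime] (V S : Set (MG p)) : Set (Set (MG p)) :=
  (fun g => ({g} : Set (MG p)) * V) '' S

section AbstractPart

variable {Γ : Type*} [Group Γ]

/-- The abstract conditions making `u` a contracting element for `(B, P, Q)`. -/
structure GoodElt (B P : Subgroup Γ) (Q : Set Γ) (u : Γ) : Prop where
  conjP : ∀ x ∈ P, u * x * u⁻¹ ∈ P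
  conjQ : ∀ x ∈ Q, u⁻¹ * x * u ∈ B
  inter : ∀ x ∈ P, u⁻¹ * x * u ∈ B → u⁻¹ * x * u ∈ P

lemma conj_le {B P : Subgroup Γ} {Q : Set Γ} {u : Γ} (h : GoodElt B P Q u) :
    MulAut.conj u • P ≤ P := by
  rintro x hx
  rw [Subgroup.mem_smul_pointwise_iff_exists] at hx
  obtain ⟨y, hy, rfl⟩ := hx
  exact h.conjP y hy

lemma mem_conj_iff {P : Subgroup Γ} {u x : Γ} :
    x ∈ MulAut.conj u • P ↔ u⁻¹ * x * u ∈ P := by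
  rw [Subgroup.mem_pointwise_smul_iff_inv_smul_mem, ← map_inv]
  simp [MulAut.smul_def]

lemma singleton_coset_eq {B : Subgroup Γ} {g h : Γ} :
    ({g} : Set Γ) * (B : Set Γ) = {h} * (B : Set Γ) ↔ g⁻¹ * h ∈ B := by
  rw [Set.singleton_mul, Set.singleton_mul]
  exact leftCoset_eq_iff B

lemma count_cosets {B P : Subgroup Γ} {Q : Set Γ} (hPB : P ≤ B)
    (hPQ : ∀ b ∈ B, ∃ x ∈ P, ∃ q ∈ Q, b = x * q) {u : Γ} (h : GoodElt B P Q u) :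
    ((fun g => ({g} : Set Γ) * (B : Set Γ)) '' ((B : Set Γ) * {u} * (B : Set Γ))).ncard
      = (MulAut.conj u • P).relIndex P := by
  let F : P ⧸ (MulAut.conj u • P).subgroupOf P → Set Γ :=
    Quotient.lift (fun x : P => ({(x : Γ) * u} : Set Γ) * (B : Set Γ)) (by
      intro a b hab
      have hab' : a⁻¹ * b ∈ (MulAut.conj u • P).subgroupOf P := QuotientGroup.leftRel_apply.mp hab
      rw [Subgroup.mem_subgroupOf, mem_conj_iff] at hab'
      show ({(a : Γ) * u} : Set Γ) * (B : Set Γ) = ({(b : Γ) * u} : Set Γ) * (B : Set Γ)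
      rw [singleton_coset_eq]
      have := hPB hab'
      convert this using 1
      simp [mul_assoc])
  have hF : Function.Injective F := by
    intro a b
    induction a using Quotient.inductionOn with | _ a => ?_
    induction b using Quotient.inductionOn with | _ b => ?_
    intro hab
    have hab' : ({(a : Γ) * u} : Set Γ) * (B : Set Γ) = ({(b : Γ) * u} : Set Γ) * (B : Set Γ) := hab
    rw [singleton_coset_eq] at hab'
    apply Quotient.sound
    show QuotientGroup.leftRel _ a b
    rw [QuotientGroup.leftRel_apply, Subgroup.mem_subgroupOf, mem_conj_iff]
    apply h.inter _ (a⁻¹ * b).2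
    convert hab' using 1
    simp [mul_assoc]
  have hR : Set.range F =
      ((fun g => ({g} : Set Γ) * (B : Set Γ)) '' ((B : Set Γ) * {u} * (B : Set Γ))) := by
    ext S
    constructor
    · rintro ⟨a, rfl⟩
      induction a using Quotient.inductionOn with | _ a => ?_
      refine ⟨(a : Γ) * u, ?_, rfl⟩
      exact ⟨(a : Γ) * u, ⟨a, hPB a.2, u, rfl, rfl⟩, 1, B.one_mem, by simp⟩
    · rintro ⟨g, ⟨_, ⟨b, hb, _, rfl, rfl⟩, b', hb', rfl⟩, rfl⟩
      obtain ⟨x, hx, q, hq, rfl⟩ := hPQ b hb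
      refine ⟨Quotient.mk _ ⟨x, hx⟩, ?_⟩
      show ({x * _} : Set Γ) * (B : Set Γ) = ({_} : Set Γ) * (B : Set Γ)
      rw [singleton_coset_eq]
      have := B.mul_mem (h.conjQ q hq) hb'
      convert this using 1
      simp [mul_assoc]
  rw [← hR, Set.ncard_def, ← Set.image_univ, hF.encard_image, ← Set.ncard_def, Set.ncard_univ]
  rfl

lemma abstract_main (B P : Subgroup Γ) (Q : Set Γ) (hPB : P ≤ B)
    (hPQ : ∀ b ∈ B, ∃ x ∈ P, ∃ q ∈ Q, b = x * q) {u v : Γ}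
    (hu : GoodElt B P Q u) (hv : GoodElt B P Q v) (huv : GoodElt B P Q (u * v))
    (hfin : (MulAut.conj (u * v) • P).relIndex P ≠ 0) :
    ((B : Set Γ) * {u} * B * {v} * B = (B : Set Γ) * {u * v} * B) ∧
    ((fun g => ({g} : Set Γ) * (B : Set Γ)) '' ((B : Set Γ) * {u * v} * (B : Set Γ))).Finite ∧
    ((fun g => ({g} : Set Γ) * (B : Set Γ)) '' ((B : Set Γ) * {u * v} * (B : Set Γ))).ncard =
    ((fun g => ({g} : Set Γ) * (B : Set Γ)) '' ((B : Set Γ) * {u} * (B : Set Γ))).ncard *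
    ((fun g => ({g} : Set Γ) * (B : Set Γ)) '' ((B : Set Γ) * {v} * (B : Set Γ))).ncard := by
  refine ⟨?_, ?_, ?_⟩
  · ext g
    constructor
    · rintro ⟨_, ⟨_, ⟨_, ⟨b, hb, u', hu', rfl⟩, c, hc, rfl⟩, v', hv', rfl⟩, d, hd, rfl⟩
      rw [Set.mem_singleton_iff] at hu' hv'
      rw [hu', hv']
      obtain ⟨x, hx, q, hq, rfl⟩ := hPQ c hc
      refine ⟨_, ⟨b * (u * x * u⁻¹), B.mul_mem hb (hPB (hu.conjP x hx)), _, rfl, rfl⟩,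
        (v⁻¹ * q * v) * d, B.mul_mem (hv.conjQ q hq) hd, ?_⟩
      simp [mul_assoc]
    · rintro ⟨_, ⟨b, hb, _, rfl, rfl⟩, d, hd, rfl⟩
      refine ⟨_, ⟨_, ⟨_, ⟨b, hb, _, rfl, rfl⟩, 1, B.one_mem, rfl⟩, _, rfl, rfl⟩, d, hd, ?_⟩
      simp [mul_assoc]
  · apply Set.finite_of_ncard_ne_zero
    rw [count_cosets hPB hPQ huv]
    exact hfin
  · rw [count_cosets hPB hPQ huv, count_cosets hPB hPQ hu, count_cosets hPB hPQ hv]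
    have h1 : MulAut.conj (u * v) • P ≤ MulAut.conj u • P := by
      rw [map_mul, mul_smul]
      exact Subgroup.pointwise_smul_le_pointwise_smul_iff.2 (conj_le hv)
    rw [← Subgroup.relIndex_mul_relIndex _ _ _ h1 (conj_le hu), mul_comm]
    congr 1
    rw [map_mul, mul_smul, Subgroup.relIndex_pointwise_smul]

end AbstractPart

section Concrete

variable {p : ℕ} [Fact p.Prime]

lemma mem_Bmn_iff {m n : ℕ} {x : MG p} : x ∈ Bmn p m n ↔
    (x.1.transpose * Jmat p * x.1 = x.2.det • Jmat p) ∧ ‖x.1.det‖ = 1 ∧ ‖x.2.det‖ = 1 ∧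
    (∀ i j, ‖x.1 i j‖ ≤ 1) ∧ (∀ i j, ‖x.2 i j‖ ≤ 1) ∧
    ‖x.2.det - 1‖ ≤ (p : ℝ) ^ (-(m : ℤ)) ∧
    (∀ i j, j < i → ‖x.1 i j‖ ≤ (p : ℝ) ^ (-(n : ℤ))) ∧
    (∀ i j, j < i → ‖x.2 i j‖ ≤ (p : ℝ) ^ (-(n : ℤ))) ∧
    ‖x.1 3 3 - 1‖ ≤ (p : ℝ) ^ (-(n : ℤ)) := by
  constructor
  · rintro ⟨⟨h1, h2, h3, h4, h5⟩, h6, h7, h8, h9, h10, h11, h12, h13, h14⟩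
    refine ⟨h5, h3, h4, h1, h2, h6, ?_, ?_, h13⟩
    · intro i j hij
      fin_cases i <;> fin_cases j <;> first | assumption | (exfalso; revert hij; decide)
    · intro i j hij
      fin_cases i <;> fin_cases j <;> first | assumption | (exfalso; revert hij; decide)
  · rintro ⟨h5, h3, h4, h1, h2, h6, h7, h8, h9⟩
    exact ⟨⟨h1, h2, h3, h4, h5⟩, h6, h7 _ _ (by decide), h7 _ _ (by decide),
      h7 _ _ (by decide), h7 _ _ (by decide), h7 _ _ (by decide), h7 _ _ (by decide), h9,
      h8 _ _ (by decide)⟩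

lemma J_sq : Jmat p * Jmat p = -1 := by
  ext i j
  fin_cases i <;> fin_cases j <;> simp [Jmat, Matrix.mul_apply, Fin.sum_univ_four]

lemma norm_add_le_of {a b : ℚ_[p]} {r : ℝ} (ha : ‖a‖ ≤ r) (hb : ‖b‖ ≤ r) : ‖a + b‖ ≤ r :=
  (Padic.nonarchimedean a b).trans (max_le ha hb)

lemma norm_mul_le_left {a b : ℚ_[p]} {r : ℝ} (ha : ‖a‖ ≤ r) (hb : ‖b‖ ≤ 1) : ‖a * b‖ ≤ r := by
  rw [norm_mul]
  have := norm_nonneg a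
  have := norm_nonneg b
  nlinarith

lemma norm_mul_le_right {a b : ℚ_[p]} {r : ℝ} (ha : ‖a‖ ≤ 1) (hb : ‖b‖ ≤ r) : ‖a * b‖ ≤ r := by
  rw [mul_comm]
  exact norm_mul_le_left hb ha

lemma norm_mat_mul {k : ℕ} {A C : Matrix (Fin k) (Fin k) ℚ_[p]} {r : ℝ} (hr : 0 ≤ r) {i j : Fin k}
    (h : ∀ l, ‖A i l * C l j‖ ≤ r) : ‖(A * C) i j‖ ≤ r := by
  rw [Matrix.mul_apply]
  exact IsUltrametricDist.norm_sum_le_of_forall_le_of_nonneg hr (fun l _ => h l)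

lemma lower_mul {k : ℕ} {A C : Matrix (Fin k) (Fin k) ℚ_[p]} {r : ℝ} (hr : 0 ≤ r)
    (hA : ∀ i j, ‖A i j‖ ≤ 1) (hC : ∀ i j, ‖C i j‖ ≤ 1)
    (hA' : ∀ i j, j < i → ‖A i j‖ ≤ r) (hC' : ∀ i j, j < i → ‖C i j‖ ≤ r) (i j : Fin k)
    (hij : j < i) : ‖(A * C) i j‖ ≤ r := by
  refine norm_mat_mul hr (fun l => ?_)
  by_cases hl : l < i
  · exact norm_mul_le_left (hA' _ _ hl) (hC _ _)
  · exact norm_mul_le_right (hA _ _) (hC' _ _ (by omega))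

lemma r_nonneg (n : ℕ) : (0 : ℝ) ≤ (p : ℝ) ^ (-(n : ℤ)) := by positivity

lemma det_inv_snd (x : (MG p)ˣ) : ((x⁻¹ : (MG p)ˣ) : MG p).2.det = ((x : MG p).2.det)⁻¹ := by
  have h : ((x⁻¹ : (MG p)ˣ) : MG p).2 * (x : MG p).2 = 1 := congrArg Prod.snd (Units.inv_mul x)
  have := congrArg Matrix.det h
  rw [Matrix.det_mul, Matrix.det_one] at this
  exact eq_inv_of_mul_eq_one_left this

lemma det_inv_fst (x : (MG p)ˣ) : ((x⁻¹ : (MG p)ˣ) : MG p).1.det = ((x : MG p).1.det)⁻¹ := by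
  have h : ((x⁻¹ : (MG p)ˣ) : MG p).1 * (x : MG p).1 = 1 := congrArg Prod.fst (Units.inv_mul x)
  have := congrArg Matrix.det h
  rw [Matrix.det_mul, Matrix.det_one] at this
  exact eq_inv_of_mul_eq_one_left this

lemma det_snd_ne (x : (MG p)ˣ) : (x : MG p).2.det ≠ 0 := by
  have h : ((x⁻¹ : (MG p)ˣ) : MG p).2 * (x : MG p).2 = 1 := congrArg Prod.snd (Units.inv_mul x)
  have := congrArg Matrix.det h
  rw [Matrix.det_mul, Matrix.det_one] at this
  exact right_ne_zero_of_mul_eq_one this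

/-- `G(ℚ_ℓ)` as a subgroup of the unit group. -/
def GQ (p : ℕ) [Fact p.Prime] : Subgroup (MG p)ˣ where
  carrier := {x | (x : MG p).1.transpose * Jmat p * (x : MG p).1 = (x : MG p).2.det • Jmat p}
  one_mem' := by simp
  mul_mem' := by
    intro x y hx hy
    simp only [Set.mem_ofPred_eq, Units.val_mul, Prod.fst_mul, Prod.snd_mul, Matrix.transpose_mul,
      Matrix.det_mul] at *
    calc _ = (y : MG p).1.transpose * ((x : MG p).1.transpose * Jmat p * (x : MG p).1)
          * (y : MG p).1 := by simp only [Matrix.mul_assoc]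
      _ = _ := by
        rw [hx, Matrix.mul_smul, Matrix.smul_mul, hy, smul_smul]
  inv_mem' := by
    intro x hx
    simp only [Set.mem_ofPred_eq] at *
    have h : (x : MG p).1 * ((x⁻¹ : (MG p)ˣ) : MG p).1 = 1 := congrArg Prod.fst (Units.mul_inv x)
    have h' : ((x⁻¹ : (MG p)ˣ) : MG p).1.transpose * (x : MG p).1.transpose = 1 := by
      rw [← Matrix.transpose_mul, h, Matrix.transpose_one]
    rw [det_inv_snd]
    set y := ((x⁻¹ : (MG p)ˣ) : MG p)
    have h2 : Jmat p = (x : MG p).2.det • (y.1.transpose * Jmat p * y.1) := by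
      calc Jmat p = (y.1.transpose * (x : MG p).1.transpose) * Jmat p * ((x : MG p).1 * y.1) := by
            rw [h, h']; simp
        _ = y.1.transpose * ((x : MG p).1.transpose * Jmat p * (x : MG p).1) * y.1 := by
            simp only [Matrix.mul_assoc]
        _ = _ := by rw [hx, Matrix.mul_smul, Matrix.smul_mul]
    conv_rhs => rw [h2]
    rw [smul_smul, inv_mul_cancel₀ (det_snd_ne x), one_smul]

lemma inv_fst_formula {x : (MG p)ˣ} (hx : x ∈ GQ p) :
    ((x⁻¹ : (MG p)ˣ) : MG p).1 =
      ((x : MG p).2.det)⁻¹ • (-(Jmat p * (x : MG p).1.transpose * Jmat p)) := by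
  have hx' : (x : MG p).1.transpose * Jmat p * (x : MG p).1 = (x : MG p).2.det • Jmat p := hx
  have h : (x : MG p).1 * ((x⁻¹ : (MG p)ˣ) : MG p).1 = 1 := congrArg Prod.fst (Units.mul_inv x)
  have h1 : (((x : MG p).2.det)⁻¹ • (-(Jmat p * (x : MG p).1.transpose * Jmat p)))
      * (x : MG p).1 = 1 := by
    rw [Matrix.smul_mul, Matrix.neg_mul, Matrix.mul_assoc, Matrix.mul_assoc, ← Matrix.mul_assoc _ (Jmat p),
      hx', Matrix.mul_smul, J_sq, smul_neg, smul_neg, smul_neg, neg_neg, smul_smul, inv_mul_cancel₀ (det_snd_ne x),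
      one_smul]
  exact (left_inv_eq_right_inv h1 h).symm

lemma inv_snd_formula (x : (MG p)ˣ) :
    ((x⁻¹ : (MG p)ˣ) : MG p).2 = ((x : MG p).2.det)⁻¹ • (x : MG p).2.adjugate := by
  have h : (x : MG p).2 * ((x⁻¹ : (MG p)ˣ) : MG p).2 = 1 := congrArg Prod.snd (Units.mul_inv x)
  have h1 : (((x : MG p).2.det)⁻¹ • (x : MG p).2.adjugate) * (x : MG p).2 = 1 := by
    rw [Matrix.smul_mul, Matrix.adjugate_mul, smul_smul, inv_mul_cancel₀ (det_snd_ne x), one_smul]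
  exact (left_inv_eq_right_inv h1 h).symm

lemma inv_fst_norm {x : (MG p)ˣ} (hx : x ∈ GQ p) (hd : ‖(x : MG p).2.det‖ = 1) (i j : Fin 4) :
    ‖((x⁻¹ : (MG p)ˣ) : MG p).1 i j‖ = ‖(x : MG p).1 j.rev i.rev‖ := by
  rw [inv_fst_formula hx, Matrix.smul_apply, smul_eq_mul, norm_mul, norm_inv, hd, inv_one, one_mul]
  generalize (x : MG p).1 = A
  rw [Matrix.neg_apply, norm_neg]
  simp only [Matrix.mul_apply, Fin.sum_univ_four, Matrix.transpose_apply]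
  fin_cases i <;> fin_cases j <;> simp [Jmat, Fin.rev]

lemma inv_snd_norm {x : (MG p)ˣ} (hd : ‖(x : MG p).2.det‖ = 1) (i j : Fin 2) :
    ‖((x⁻¹ : (MG p)ˣ) : MG p).2 i j‖ = ‖(x : MG p).2 j.rev i.rev‖ := by
  rw [inv_snd_formula x, Matrix.smul_apply, smul_eq_mul, norm_mul, norm_inv, hd, inv_one, one_mul]
  generalize (x : MG p).2 = A
  fin_cases i <;> fin_cases j <;> simp [Matrix.adjugate_fin_two]

lemma mat_one_norm {k : ℕ} (i j : Fin k) : ‖(1 : Matrix (Fin k) (Fin k) ℚ_[p]) i j‖ ≤ 1 := by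
  rw [Matrix.one_apply]
  split_ifs <;> simp

/-- `B_{m,n}` as a subgroup. -/
def Bs (p : ℕ) [Fact p.Prime] (m n : ℕ) : Subgroup (MG p)ˣ where
  carrier := {x | (x : MG p) ∈ Bmn p m n}
  one_mem' := by
    simp only [Set.mem_ofPred_eq, mem_Bmn_iff]
    refine ⟨by simp, by simp, by simp, mat_one_norm, mat_one_norm, by simp, ?_, ?_, by simp⟩
    · intro i j hij
      simp [Matrix.one_apply_ne hij.ne']
    · intro i j hij
      simp [Matrix.one_apply_ne hij.ne']
  mul_mem' := by
    intro x y hx hy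
    simp only [Set.mem_ofPred_eq, mem_Bmn_iff] at *
    obtain ⟨h1, h2, h3, h4, h5, h6, h7, h8, h9⟩ := hx
    obtain ⟨k1, k2, k3, k4, k5, k6, k7, k8, k9⟩ := hy
    refine ⟨(GQ p).mul_mem h1 k1, ?_, ?_, ?_, ?_, ?_, ?_, ?_, ?_⟩
    · rw [Units.val_mul, Prod.fst_mul, Matrix.det_mul, norm_mul, h2, k2, one_mul]
    · rw [Units.val_mul, Prod.snd_mul, Matrix.det_mul, norm_mul, h3, k3, one_mul]
    · intro i j
      exact norm_mat_mul zero_le_one (fun l => norm_mul_le_left (h4 _ _) (k4 _ _))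
    · intro i j
      exact norm_mat_mul zero_le_one (fun l => norm_mul_le_left (h5 _ _) (k5 _ _))
    · rw [Units.val_mul, Prod.snd_mul, Matrix.det_mul]
      generalize (x : MG p).2.det = μ at *
      generalize (y : MG p).2.det = ν at *
      rw [show μ * ν - 1 = μ * (ν - 1) + (μ - 1) by ring]
      exact norm_add_le_of (norm_mul_le_right h3.le k6) h6
    · exact lower_mul (r_nonneg n) h4 k4 h7 k7
    · exact lower_mul (r_nonneg n) h5 k5 h8 k8
    · rw [Units.val_mul, Prod.fst_mul, Matrix.mul_apply, Fin.sum_univ_four]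
      generalize (x : MG p).1 = X at *
      generalize (y : MG p).1 = Y at *
      rw [show X 3 0 * Y 0 3 + X 3 1 * Y 1 3 + X 3 2 * Y 2 3 + X 3 3 * Y 3 3 - 1 =
        X 3 0 * Y 0 3 + X 3 1 * Y 1 3 + X 3 2 * Y 2 3 + (X 3 3 * (Y 3 3 - 1) + (X 3 3 - 1)) by ring]
      exact norm_add_le_of (norm_add_le_of (norm_add_le_of
        (norm_mul_le_left (h7 _ _ (by decide)) (k4 _ _))
        (norm_mul_le_left (h7 _ _ (by decide)) (k4 _ _)))
        (norm_mul_le_left (h7 _ _ (by decide)) (k4 _ _)))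
        (norm_add_le_of (norm_mul_le_right (h4 _ _) k9) h9)
  inv_mem' := by
    intro x hx
    simp only [Set.mem_ofPred_eq, mem_Bmn_iff] at *
    obtain ⟨h1, h2, h3, h4, h5, h6, h7, h8, h9⟩ := hx
    have l4 : ∀ i j, ‖((x⁻¹ : (MG p)ˣ) : MG p).1 i j‖ ≤ 1 := by
      intro i j
      rw [inv_fst_norm h1 h3]
      exact h4 _ _
    have l7 : ∀ i j, j < i → ‖((x⁻¹ : (MG p)ˣ) : MG p).1 i j‖ ≤ (p : ℝ) ^ (-(n : ℤ)) := by
      intro i j hij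
      rw [inv_fst_norm h1 h3]
      exact h7 _ _ (Fin.rev_lt_rev.2 hij)
    refine ⟨(GQ p).inv_mem h1, ?_, ?_, l4, ?_, ?_, l7, ?_, ?_⟩
    · rw [det_inv_fst, norm_inv, h2, inv_one]
    · rw [det_inv_snd, norm_inv, h3, inv_one]
    · intro i j
      rw [inv_snd_norm h3]
      exact h5 _ _
    · rw [det_inv_snd]
      have h0 := det_snd_ne x
      generalize (x : MG p).2.det = μ at *
      rw [show μ⁻¹ - 1 = (-μ⁻¹) * (μ - 1) by field_simp; ring]
      refine norm_mul_le_right ?_ h6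
      rw [norm_neg, norm_inv, h3, inv_one]
    · intro i j hij
      rw [inv_snd_norm h3]
      exact h8 _ _ (Fin.rev_lt_rev.2 hij)
    · have h : ((x⁻¹ : (MG p)ˣ) : MG p).1 * (x : MG p).1 = 1 := congrArg Prod.fst (Units.inv_mul x)
      have h' := congrFun (congrFun h 3) 3
      rw [Matrix.mul_apply, Fin.sum_univ_four, Matrix.one_apply_eq] at h'
      generalize ((x⁻¹ : (MG p)ˣ) : MG p).1 = Y at *
      generalize (x : MG p).1 = X at *
      rw [show Y 3 3 - 1 = (-(Y 3 3)) * (X 3 3 - 1) + (Y 3 0 * (-X 0 3) + Y 3 1 * (-X 1 3) +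
        Y 3 2 * (-X 2 3)) by linear_combination h']
      have h4' : ∀ i j, ‖- X i j‖ ≤ 1 := fun i j => by rw [norm_neg]; exact h4 i j
      refine norm_add_le_of (norm_mul_le_right (by rw [norm_neg]; exact l4 _ _) h9) ?_
      exact norm_add_le_of (norm_add_le_of
        (norm_mul_le_left (l7 _ _ (by decide)) (h4' _ _))
        (norm_mul_le_left (l7 _ _ (by decide)) (h4' _ _)))
        (norm_mul_le_left (l7 _ _ (by decide)) (h4' _ _))

lemma mem_Bs {m n : ℕ} {x : (MG p)ˣ} : x ∈ Bs p m n ↔ (x : MG p) ∈ Bmn p m n := Iff.rfl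

lemma Bs_le_GQ {m n : ℕ} : Bs p m n ≤ GQ p := fun _ hx => (mem_Bmn_iff.1 hx).1

/-- The upper triangular part. -/
def Ps (p : ℕ) [Fact p.Prime] (m n : ℕ) : Subgroup (MG p)ˣ where
  carrier := {x | x ∈ Bs p m n ∧ (∀ i j, j < i → (x : MG p).1 i j = 0) ∧
    (∀ i j, j < i → (x : MG p).2 i j = 0)}
  one_mem' := by
    refine ⟨(Bs p m n).one_mem, ?_, ?_⟩
    · intro i j hij
      simp [Matrix.one_apply_ne hij.ne']
    · intro i j hij
      simp [Matrix.one_apply_ne hij.ne']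
  mul_mem' := by
    rintro x y ⟨hx, hx1, hx2⟩ ⟨hy, hy1, hy2⟩
    obtain ⟨h1, h2, h3, h4, h5, h6, h7, h8, h9⟩ := mem_Bmn_iff.1 hx
    obtain ⟨k1, k2, k3, k4, k5, k6, k7, k8, k9⟩ := mem_Bmn_iff.1 hy
    refine ⟨(Bs p m n).mul_mem hx hy, ?_, ?_⟩
    · intro i j hij
      refine norm_le_zero_iff.1 (lower_mul le_rfl h4 k4 ?_ ?_ i j hij)
      · intro i j hij; rw [hx1 i j hij, norm_zero]
      · intro i j hij; rw [hy1 i j hij, norm_zero]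
    · intro i j hij
      refine norm_le_zero_iff.1 (lower_mul le_rfl h5 k5 ?_ ?_ i j hij)
      · intro i j hij; rw [hx2 i j hij, norm_zero]
      · intro i j hij; rw [hy2 i j hij, norm_zero]
  inv_mem' := by
    rintro x ⟨hx, hx1, hx2⟩
    obtain ⟨h1, h2, h3, h4, h5, h6, h7, h8, h9⟩ := mem_Bmn_iff.1 hx
    refine ⟨(Bs p m n).inv_mem hx, ?_, ?_⟩
    · intro i j hij
      rw [← norm_eq_zero, inv_fst_norm h1 h3, hx1 _ _ (Fin.rev_lt_rev.2 hij), norm_zero]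
    · intro i j hij
      rw [← norm_eq_zero, inv_snd_norm h3, hx2 _ _ (Fin.rev_lt_rev.2 hij), norm_zero]

lemma Ps_le {m n : ℕ} : Ps p m n ≤ Bs p m n := fun _ hx => hx.1

/-- The lower triangular part. -/
def Qs (p : ℕ) [Fact p.Prime] (m n : ℕ) : Set (MG p)ˣ :=
  {x | x ∈ Bs p m n ∧ (∀ i j, i < j → (x : MG p).1 i j = 0) ∧
    (∀ i j, i < j → (x : MG p).2 i j = 0)}

lemma exists_unit (A : Matrix (Fin 4) (Fin 4) ℚ_[p]) (C : Matrix (Fin 2) (Fin 2) ℚ_[p])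
    (hA : A.det ≠ 0) (hC : C.det ≠ 0) : ∃ u : (MG p)ˣ, (u : MG p) = (A, C) := by
  have : IsUnit ((A, C) : MG p) := by
    rw [Prod.isUnit_iff]
    exact ⟨(Matrix.isUnit_iff_isUnit_det _).2 hA.isUnit, (Matrix.isUnit_iff_isUnit_det _).2 hC.isUnit⟩
  exact ⟨this.unit, rfl⟩

lemma r_lt_one {n : ℕ} (hn : 1 ≤ n) : (p : ℝ) ^ (-(n : ℤ)) < 1 := by
  have hp : (1 : ℝ) < p := by exact_mod_cast (Fact.out : p.Prime).one_lt
  exact zpow_lt_one_of_neg₀ hp (by omega)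

lemma norm_eq_one_of {a b : ℚ_[p]} (ha : ‖a‖ = 1) (hb : ‖b‖ < 1) : ‖a + b‖ = 1 := by
  rw [IsUltrametricDist.norm_add_eq_max_of_norm_ne_norm (by rw [ha]; exact hb.ne'), ha,
    max_eq_left hb.le]

lemma norm_left_eq_one {a b : ℚ_[p]} (ha : ‖a‖ ≤ 1) (hb : ‖b‖ ≤ 1) (h : ‖a * b‖ = 1) :
    ‖b‖ = 1 := by
  rw [norm_mul] at h
  have := norm_nonneg a
  have := norm_nonneg b
  nlinarith

lemma entry33 {m n : ℕ} (hn : 1 ≤ n) {x : (MG p)ˣ} (hx : x ∈ Bs p m n) :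
    ‖(x : MG p).1 3 3‖ = 1 := by
  have h := (mem_Bmn_iff.1 hx).2.2.2.2.2.2.2.2
  have := norm_eq_one_of (p := p) (a := 1) (by simp) (h.trans_lt (r_lt_one hn))
  rwa [add_sub_cancel] at this

lemma entry2_11 {m n : ℕ} (hn : 1 ≤ n) {x : (MG p)ˣ} (hx : x ∈ Bs p m n) :
    ‖(x : MG p).2 1 1‖ = 1 := by
  obtain ⟨h1, h2, h3, h4, h5, h6, h7, h8, h9⟩ := mem_Bmn_iff.1 hx
  refine norm_left_eq_one (h5 0 0) (h5 1 1) ?_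
  have e := Matrix.det_fin_two (x : MG p).2
  rw [show (x : MG p).2 0 0 * (x : MG p).2 1 1 = (x : MG p).2.det +
    (x : MG p).2 0 1 * (x : MG p).2 1 0 by rw [e]; ring]
  exact norm_eq_one_of h3
    ((norm_mul_le_right (h5 0 1) (h8 1 0 (by decide))).trans_lt (r_lt_one hn))

lemma symp_entry {x : (MG p)ˣ} (hx : x ∈ GQ p) (i j : Fin 4) :
    (x : MG p).1 0 i * (x : MG p).1 3 j + (x : MG p).1 1 i * (x : MG p).1 2 j
    - (x : MG p).1 2 i * (x : MG p).1 1 j - (x : MG p).1 3 i * (x : MG p).1 0 j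
      = (x : MG p).2.det * Jmat p i j := by
  have hx' : (x : MG p).1.transpose * Jmat p * (x : MG p).1 = (x : MG p).2.det • Jmat p := hx
  have := congrFun (congrFun hx' i) j
  rw [Matrix.smul_apply, smul_eq_mul] at this
  rw [← this]
  simp [Matrix.mul_apply, Fin.sum_univ_four, Jmat]
  ring

lemma entry22 {m n : ℕ} (hn : 1 ≤ n) {x : (MG p)ˣ} (hx : x ∈ Bs p m n) :
    ‖(x : MG p).1 2 2‖ = 1 := by
  obtain ⟨h1, h2, h3, h4, h5, h6, h7, h8, h9⟩ := mem_Bmn_iff.1 hx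
  refine norm_left_eq_one (h4 1 1) (h4 2 2) ?_
  have e := symp_entry (Bs_le_GQ hx) 1 2
  have hJ : Jmat p 1 2 = 1 := by simp [Jmat]
  rw [hJ, mul_one] at e
  generalize (x : MG p).2.det = μ at *
  generalize (x : MG p).1 = X at *
  rw [show X 1 1 * X 2 2 = μ + ((- X 0 1) * X 3 2 + (X 2 1 * X 1 2 + X 3 1 * X 0 2)) by
    linear_combination e]
  refine norm_eq_one_of h3 (lt_of_le_of_lt ?_ (r_lt_one (p := p) hn))
  refine norm_add_le_of (norm_mul_le_right (by rw [norm_neg]; exact h4 _ _) (h7 _ _ (by decide))) ?_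
  exact norm_add_le_of (norm_mul_le_left (h7 _ _ (by decide)) (h4 _ _))
    (norm_mul_le_left (h7 _ _ (by decide)) (h4 _ _))

lemma step_one (m n : ℕ) (x y z w : ℚ_[p]) (hx : ‖x‖ ≤ 1) (hy : ‖y‖ ≤ 1) (hz : ‖z‖ ≤ 1)
    (hw : ‖w‖ ≤ 1) : ∃ u ∈ Ps p m n, (u : MG p) =
      (!![1, -z, y, x; 0, 1, 0, y; 0, 0, 1, z; 0, 0, 0, 1], !![1, w; 0, 1]) := by
  have hd : (!![1, -z, y, x; 0, 1, 0, y; 0, 0, 1, z; 0, 0, 0, 1]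
      : Matrix (Fin 4) (Fin 4) ℚ_[p]).det = 1 := by
    simp [Matrix.det_succ_row_zero, Fin.sum_univ_succ, Fin.succAbove]
  have hd2 : (!![1, w; 0, 1] : Matrix (Fin 2) (Fin 2) ℚ_[p]).det = 1 := by
    simp [Matrix.det_fin_two]
  obtain ⟨u, hu⟩ := exists_unit (p := p) _ _ (by rw [hd]; exact one_ne_zero)
    (by rw [hd2]; exact one_ne_zero)
  refine ⟨u, ⟨?_, ?_, ?_⟩, hu⟩
  · rw [mem_Bs, mem_Bmn_iff, hu]
    simp only [hd, hd2]
    refine ⟨?_, by simp, by simp, ?_, ?_, by simp, ?_, ?_, by simp⟩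
    · ext i j
      fin_cases i <;> fin_cases j <;> simp [Matrix.mul_apply, Fin.sum_univ_four, Jmat]
      ring
    · intro i j
      fin_cases i <;> fin_cases j <;> simp [hx, hy, hz]
    · intro i j
      fin_cases i <;> fin_cases j <;> simp [hw]
    · intro i j hij
      fin_cases i <;> fin_cases j <;> first | (exfalso; revert hij; decide) | simp
    · intro i j hij
      fin_cases i <;> fin_cases j <;> first | (exfalso; revert hij; decide) | simp
  · rw [hu]
    intro i j hij
    fin_cases i <;> fin_cases j <;> first | (exfalso; revert hij; decide) | simp
  · rw [hu]
    intro i j hij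
    fin_cases i <;> fin_cases j <;> first | (exfalso; revert hij; decide) | simp

lemma step_two (m n : ℕ) (s : ℚ_[p]) (hs : ‖s‖ ≤ 1) : ∃ u ∈ Ps p m n, (u : MG p) =
      (!![1, 0, 0, 0; 0, 1, s, 0; 0, 0, 1, 0; 0, 0, 0, 1], 1) := by
  have hd : (!![1, 0, 0, 0; 0, 1, s, 0; 0, 0, 1, 0; 0, 0, 0, 1]
      : Matrix (Fin 4) (Fin 4) ℚ_[p]).det = 1 := by
    simp [Matrix.det_succ_row_zero, Fin.sum_univ_succ, Fin.succAbove]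
  have hd2 : (1 : Matrix (Fin 2) (Fin 2) ℚ_[p]).det = 1 := by
    simp
  obtain ⟨u, hu⟩ := exists_unit (p := p) _ _ (by rw [hd]; exact one_ne_zero)
    (by rw [hd2]; exact one_ne_zero)
  refine ⟨u, ⟨?_, ?_, ?_⟩, hu⟩
  · rw [mem_Bs, mem_Bmn_iff, hu]
    simp only [hd, hd2]
    refine ⟨?_, by simp, by simp, ?_, mat_one_norm, by simp, ?_, ?_, by simp⟩
    · ext i j
      fin_cases i <;> fin_cases j <;> simp [Matrix.mul_apply, Fin.sum_univ_four, Jmat]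
    · intro i j
      fin_cases i <;> fin_cases j <;> simp [hs]
    · intro i j hij
      fin_cases i <;> fin_cases j <;> first | (exfalso; revert hij; decide) | simp
    · intro i j hij
      simp [Matrix.one_apply_ne hij.ne']
  · rw [hu]
    intro i j hij
    fin_cases i <;> fin_cases j <;> first | (exfalso; revert hij; decide) | simp
  · rw [hu]
    intro i j hij
    simp [Matrix.one_apply_ne hij.ne']

lemma factor {m n : ℕ} (hn : 1 ≤ n) (b : (MG p)ˣ) (hb : b ∈ Bs p m n) :
    ∃ x ∈ Ps p m n, ∃ q ∈ Qs p m n, b = x * q := by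
  obtain ⟨h1, h2, h3, h4, h5, h6, h7, h8, h9⟩ := mem_Bmn_iff.1 hb
  have n33 := entry33 hn hb
  have n11 := entry2_11 hn hb
  have z33 : (b : MG p).1 3 3 ≠ 0 := by intro h; rw [h] at n33; simp at n33
  have z11 : (b : MG p).2 1 1 ≠ 0 := by intro h; rw [h] at n11; simp at n11
  obtain ⟨u, hu, hu'⟩ := step_one m n ((b : MG p).1 0 3 / (b : MG p).1 3 3)
    ((b : MG p).1 1 3 / (b : MG p).1 3 3) ((b : MG p).1 2 3 / (b : MG p).1 3 3)
    ((b : MG p).2 0 1 / (b : MG p).2 1 1)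
    (by rw [norm_div, n33, div_one]; exact h4 _ _) (by rw [norm_div, n33, div_one]; exact h4 _ _)
    (by rw [norm_div, n33, div_one]; exact h4 _ _) (by rw [norm_div, n11, div_one]; exact h5 _ _)
  obtain ⟨c, hc⟩ : ∃ c, c = u⁻¹ * b := ⟨_, rfl⟩
  have hcB : c ∈ Bs p m n := by
    rw [hc]; exact (Bs p m n).mul_mem ((Bs p m n).inv_mem (Ps_le hu)) hb
  have hbc : b = u * c := by rw [hc]; simp
  have e1 : (b : MG p).1 = (u : MG p).1 * (c : MG p).1 := by rw [hbc]; rfl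
  have e2 : (b : MG p).2 = (u : MG p).2 * (c : MG p).2 := by rw [hbc]; rfl
  have f1 : ∀ i, (b : MG p).1 i 3 = ((u : MG p).1 * (c : MG p).1) i 3 := fun i => by rw [← e1]
  have f2 : ∀ i, (b : MG p).2 i 1 = ((u : MG p).2 * (c : MG p).2) i 1 := fun i => by rw [← e2]
  have f10 := f1 0
  have f11 := f1 1
  have f12 := f1 2
  have f13 := f1 3
  have f20 := f2 0
  have f21 := f2 1
  rw [hu'] at f10 f11 f12 f13 f20 f21
  simp only [Matrix.mul_apply, Fin.sum_univ_four, Fin.sum_univ_two] at f10 f11 f12 f13 f20 f21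
  simp at f10 f11 f12 f13 f20 f21
  rw [← f13] at f10 f11 f12
  rw [← f21] at f20
  rw [div_mul_cancel₀ _ z33] at f10 f11 f12
  rw [div_mul_cancel₀ _ z11] at f20
  have c23 : (c : MG p).1 2 3 = 0 := by linear_combination -f12
  have c13 : (c : MG p).1 1 3 = 0 := by linear_combination -f11
  have c03 : (c : MG p).1 0 3 = 0 := by
    rw [c13, c23] at f10
    linear_combination -f10
  have d01 : (c : MG p).2 0 1 = 0 := by linear_combination -f20
  have cz33 : (c : MG p).1 3 3 ≠ 0 := by rw [← f13]; exact z33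
  have c01 : (c : MG p).1 0 1 = 0 := by
    have := symp_entry (Bs_le_GQ hcB) 1 3
    rw [c03, c13, c23] at this
    simp [Jmat] at this
    exact this.resolve_right cz33
  have c02 : (c : MG p).1 0 2 = 0 := by
    have := symp_entry (Bs_le_GQ hcB) 2 3
    rw [c03, c13, c23] at this
    simp [Jmat] at this
    exact this.resolve_right cz33
  have n22 := entry22 hn hcB
  have z22 : (c : MG p).1 2 2 ≠ 0 := by intro h; rw [h] at n22; simp at n22
  obtain ⟨v, hv, hv'⟩ := step_two m n ((c : MG p).1 1 2 / (c : MG p).1 2 2)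
    (by rw [norm_div, n22, div_one]; exact (mem_Bmn_iff.1 hcB).2.2.2.1 _ _)
  obtain ⟨q, hq⟩ : ∃ q, q = v⁻¹ * c := ⟨_, rfl⟩
  have hqB : q ∈ Bs p m n := by
    rw [hq]; exact (Bs p m n).mul_mem ((Bs p m n).inv_mem (Ps_le hv)) hcB
  have hcq : c = v * q := by rw [hq]; simp
  have e1' : (c : MG p).1 = (v : MG p).1 * (q : MG p).1 := by rw [hcq]; rfl
  have e2' : (c : MG p).2 = (q : MG p).2 := by
    rw [hcq, Units.val_mul, Prod.snd_mul, hv']; simp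
  have g : ∀ i j, (c : MG p).1 i j = ((v : MG p).1 * (q : MG p).1) i j := fun i j => by rw [← e1']
  have g01 := g 0 1
  have g02 := g 0 2
  have g03 := g 0 3
  have g12 := g 1 2
  have g13 := g 1 3
  have g23 := g 2 3
  have g22 := g 2 2
  rw [hv'] at g01 g02 g03 g12 g13 g23 g22
  simp only [Matrix.mul_apply, Fin.sum_univ_four] at g01 g02 g03 g12 g13 g23 g22
  simp at g01 g02 g03 g12 g13 g23 g22
  rw [← g22, div_mul_cancel₀ _ z22] at g12
  have q12 : (q : MG p).1 1 2 = 0 := by linear_combination -g12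
  have q23 : (q : MG p).1 2 3 = 0 := by rw [← g23, c23]
  have q13 : (q : MG p).1 1 3 = 0 := by
    rw [q23, c13] at g13
    linear_combination -g13
  refine ⟨u * v, (Ps p m n).mul_mem hu hv, q, ⟨hqB, ?_, ?_⟩, by rw [hbc, hcq, mul_assoc]⟩
  · intro i j hij
    fin_cases i <;> fin_cases j <;>
      first
        | (exfalso; revert hij; decide)
        | exact g01.symm.trans c01
        | exact g02.symm.trans c02
        | exact g03.symm.trans c03
        | exact q12
        | exact q13
        | exact q23
  · rw [← e2']
    intro i j hij
    fin_cases i <;> fin_cases j <;>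
      first
        | (exfalso; revert hij; decide)
        | exact d01

/-- Exponents of the first component of `u`. -/
def tv (p : ℕ) [Fact p.Prime] (a b : ℕ) : Fin 4 → ℚ_[p] :=
  ![(p : ℚ_[p]) ^ (a + b), (p : ℚ_[p]) ^ b, (p : ℚ_[p]) ^ a, 1]

/-- Exponents of the second component of `u`. -/
def sv (p : ℕ) [Fact p.Prime] (c d : ℕ) : Fin 2 → ℚ_[p] :=
  ![(p : ℚ_[p]) ^ d, (p : ℚ_[p]) ^ c]

lemma p_ne : (p : ℚ_[p]) ≠ 0 := by
  exact_mod_cast (Fact.out : p.Prime).ne_zero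

lemma tv_ne (a b : ℕ) (i : Fin 4) : tv p a b i ≠ 0 := by
  have := p_ne (p := p)
  fin_cases i <;> simp [tv, this]

lemma sv_ne (c d : ℕ) (i : Fin 2) : sv p c d i ≠ 0 := by
  have := p_ne (p := p)
  fin_cases i <;> simp [sv, this]

/-- `u` as a unit. -/
def uu (p : ℕ) [Fact p.Prime] (a b c d : ℕ) : (MG p)ˣ where
  val := vElt p a b c d
  inv := (Matrix.diagonal (fun i => (tv p a b i)⁻¹), Matrix.diagonal (fun i => (sv p c d i)⁻¹))
  val_inv := by
    have h1 := tv_ne (p := p) a b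
    have h2 := sv_ne (p := p) c d
    show ((Matrix.diagonal (tv p a b) * _, Matrix.diagonal (sv p c d) * _) : MG p) = 1
    simp [h1, h2, Prod.ext_iff]
  inv_val := by
    have h1 := tv_ne (p := p) a b
    have h2 := sv_ne (p := p) c d
    show ((_ * Matrix.diagonal (tv p a b), _ * Matrix.diagonal (sv p c d)) : MG p) = 1
    simp [h1, h2, Prod.ext_iff]

lemma uu_mul (a₁ b₁ c₁ d₁ a₂ b₂ c₂ d₂ : ℕ) : uu p a₁ b₁ c₁ d₁ * uu p a₂ b₂ c₂ d₂ =
    uu p (a₁ + a₂) (b₁ + b₂) (c₁ + c₂) (d₁ + d₂) := by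
  ext i j
  · show ((Matrix.diagonal (tv p a₁ b₁) * Matrix.diagonal (tv p a₂ b₂)) i j) =
      Matrix.diagonal (tv p (a₁ + a₂) (b₁ + b₂)) i j
    rw [Matrix.diagonal_mul_diagonal]
    congr 2
    ext k
    fin_cases k <;> simp [tv] <;> ring
  · show ((Matrix.diagonal (sv p c₁ d₁) * Matrix.diagonal (sv p c₂ d₂)) i j) =
      Matrix.diagonal (sv p (c₁ + c₂) (d₁ + d₂)) i j
    rw [Matrix.diagonal_mul_diagonal]
    congr 2
    ext k
    fin_cases k <;> simp [sv] <;> ring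

lemma uu_mem {a b c d : ℕ} (h : a + b = c + d) : uu p a b c d ∈ GQ p := by
  show (Matrix.diagonal (tv p a b)).transpose * Jmat p * Matrix.diagonal (tv p a b) =
    (Matrix.diagonal (sv p c d)).det • Jmat p
  have h' : (p : ℚ_[p]) ^ a * (p : ℚ_[p]) ^ b = (p : ℚ_[p]) ^ c * (p : ℚ_[p]) ^ d := by
    rw [← pow_add, ← pow_add, h]
  rw [Matrix.diagonal_transpose, Matrix.det_diagonal]
  ext i j
  rw [Matrix.mul_diagonal, Matrix.diagonal_mul, Matrix.smul_apply]
  fin_cases i <;> fin_cases j <;> simp [tv, sv, Jmat, pow_add] <;> linear_combination h'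

lemma conj_fst (a b c d : ℕ) (x : (MG p)ˣ) (i j : Fin 4) :
    ((uu p a b c d * x * (uu p a b c d)⁻¹ : (MG p)ˣ) : MG p).1 i j =
      tv p a b i * (x : MG p).1 i j * (tv p a b j)⁻¹ := by
  show (Matrix.diagonal (tv p a b) * (x : MG p).1 * Matrix.diagonal (fun i => (tv p a b i)⁻¹)) i j = _
  rw [Matrix.mul_diagonal, Matrix.diagonal_mul]

lemma conj_snd (a b c d : ℕ) (x : (MG p)ˣ) (i j : Fin 2) :
    ((uu p a b c d * x * (uu p a b c d)⁻¹ : (MG p)ˣ) : MG p).2 i j =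
      sv p c d i * (x : MG p).2 i j * (sv p c d j)⁻¹ := by
  show (Matrix.diagonal (sv p c d) * (x : MG p).2 * Matrix.diagonal (fun i => (sv p c d i)⁻¹)) i j = _
  rw [Matrix.mul_diagonal, Matrix.diagonal_mul]

lemma conj_fst' (a b c d : ℕ) (x : (MG p)ˣ) (i j : Fin 4) :
    (((uu p a b c d)⁻¹ * x * (uu p a b c d) : (MG p)ˣ) : MG p).1 i j =
      (tv p a b i)⁻¹ * (x : MG p).1 i j * (tv p a b j) := by
  show (Matrix.diagonal (fun i => (tv p a b i)⁻¹) * (x : MG p).1 * Matrix.diagonal (tv p a b)) i j = _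
  rw [Matrix.mul_diagonal, Matrix.diagonal_mul]

lemma conj_snd' (a b c d : ℕ) (x : (MG p)ˣ) (i j : Fin 2) :
    (((uu p a b c d)⁻¹ * x * (uu p a b c d) : (MG p)ˣ) : MG p).2 i j =
      (sv p c d i)⁻¹ * (x : MG p).2 i j * (sv p c d j) := by
  show (Matrix.diagonal (fun i => (sv p c d i)⁻¹) * (x : MG p).2 * Matrix.diagonal (sv p c d)) i j = _
  rw [Matrix.mul_diagonal, Matrix.diagonal_mul]

lemma conj_mem_B {m n : ℕ} {x g : (MG p)ˣ} (hg : g ∈ GQ p) (hx : x ∈ Bs p m n)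
    (h1 : ∀ i j, ‖((g * x * g⁻¹ : (MG p)ˣ) : MG p).1 i j‖ ≤ 1)
    (h2 : ∀ i j, ‖((g * x * g⁻¹ : (MG p)ˣ) : MG p).2 i j‖ ≤ 1)
    (h3 : ∀ i j, j < i → ‖((g * x * g⁻¹ : (MG p)ˣ) : MG p).1 i j‖ ≤ ‖(x : MG p).1 i j‖)
    (h4 : ∀ i j, j < i → ‖((g * x * g⁻¹ : (MG p)ˣ) : MG p).2 i j‖ ≤ ‖(x : MG p).2 i j‖)
    (h5 : ((g * x * g⁻¹ : (MG p)ˣ) : MG p).1 3 3 = (x : MG p).1 3 3) :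
    g * x * g⁻¹ ∈ Bs p m n := by
  obtain ⟨k1, k2, k3, k4, k5, k6, k7, k8, k9⟩ := mem_Bmn_iff.1 hx
  have hd1 : ((g * x * g⁻¹ : (MG p)ˣ) : MG p).1.det = (x : MG p).1.det := by
    have hne : (g : MG p).1.det ≠ 0 := by
      have h : ((g⁻¹ : (MG p)ˣ) : MG p).1 * (g : MG p).1 = 1 := congrArg Prod.fst (Units.inv_mul g)
      have := congrArg Matrix.det h
      rw [Matrix.det_mul, Matrix.det_one] at this
      exact right_ne_zero_of_mul_eq_one this
    rw [Units.val_mul, Units.val_mul, Prod.fst_mul, Prod.fst_mul, Matrix.det_mul, Matrix.det_mul,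
      det_inv_fst]
    field_simp
  have hd2 : ((g * x * g⁻¹ : (MG p)ˣ) : MG p).2.det = (x : MG p).2.det := by
    have hne := det_snd_ne g
    rw [Units.val_mul, Units.val_mul, Prod.snd_mul, Prod.snd_mul, Matrix.det_mul, Matrix.det_mul,
      det_inv_snd]
    field_simp
  rw [mem_Bs, mem_Bmn_iff]
  refine ⟨(GQ p).mul_mem ((GQ p).mul_mem hg k1) ((GQ p).inv_mem hg), ?_, ?_, h1, h2, ?_, ?_, ?_, ?_⟩
  · rw [hd1, k2]
  · rw [hd2, k3]
  · rw [hd2]; exact k6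
  · intro i j hij; exact (h3 i j hij).trans (k7 i j hij)
  · intro i j hij; exact (h4 i j hij).trans (k8 i j hij)
  · rw [h5]; exact k9

lemma tv_le {a b : ℕ} (hab : a ≤ b) {i j : Fin 4} (hij : i ≤ j) :
    ‖tv p a b i‖ * ‖tv p a b j‖⁻¹ ≤ 1 := by
  have h0 : 0 < ‖tv p a b j‖ := norm_pos_iff.2 (tv_ne a b j)
  rw [← div_eq_mul_inv, div_le_one h0]
  have hq0 : 0 ≤ ‖(p : ℚ_[p])‖ := norm_nonneg _
  have hq : ‖(p : ℚ_[p])‖ ≤ 1 := Padic.norm_p_lt_one.le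
  have hm : ∀ e f : ℕ, f ≤ e → ‖(p : ℚ_[p])‖ ^ e ≤ ‖(p : ℚ_[p])‖ ^ f := fun e f h =>
    pow_le_pow_of_le_one hq0 hq h
  have hm0 : ∀ e : ℕ, ‖(p : ℚ_[p])‖ ^ e ≤ 1 := fun e => pow_le_one₀ hq0 hq
  fin_cases i <;> fin_cases j <;>
    first
      | (exfalso; revert hij; decide)
      | (simp only [tv]
         simp only [Fin.zero_eta, Fin.mk_one, Fin.reduceFinMk, Matrix.cons_val, norm_pow, norm_one]
         first
           | exact hm _ _ (by omega)
           | exact hm0 _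
           | exact le_rfl)

lemma sv_le {c d : ℕ} (hcd : c ≤ d) {i j : Fin 2} (hij : i ≤ j) :
    ‖sv p c d i‖ * ‖sv p c d j‖⁻¹ ≤ 1 := by
  have h0 : 0 < ‖sv p c d j‖ := norm_pos_iff.2 (sv_ne c d j)
  rw [← div_eq_mul_inv, div_le_one h0]
  have hq0 : 0 ≤ ‖(p : ℚ_[p])‖ := norm_nonneg _
  have hq : ‖(p : ℚ_[p])‖ ≤ 1 := Padic.norm_p_lt_one.le
  have hm : ∀ e f : ℕ, f ≤ e → ‖(p : ℚ_[p])‖ ^ e ≤ ‖(p : ℚ_[p])‖ ^ f := fun e f h =>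
    pow_le_pow_of_le_one hq0 hq h
  fin_cases i <;> fin_cases j <;>
    first
      | (exfalso; revert hij; decide)
      | (simp only [sv]
         simp only [Fin.zero_eta, Fin.mk_one, Fin.reduceFinMk, Matrix.cons_val, norm_pow, norm_one]
         exact hm _ _ (by omega))

lemma conj_scale {t s e : ℚ_[p]} (h : ‖t‖ * ‖s‖⁻¹ ≤ 1) : ‖t * e * s⁻¹‖ ≤ ‖e‖ := by
  rw [norm_mul, norm_mul, norm_inv]
  have := norm_nonneg e
  nlinarith [mul_le_mul_of_nonneg_left h this]

lemma conj_scale' {t s e : ℚ_[p]} (h : ‖s‖ * ‖t‖⁻¹ ≤ 1) : ‖t⁻¹ * e * s‖ ≤ ‖e‖ := by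
  rw [norm_mul, norm_mul, norm_inv]
  have := norm_nonneg e
  nlinarith [mul_le_mul_of_nonneg_left h this]

lemma good {m n a b c d : ℕ} (hab : a ≤ b) (hcd : c ≤ d) (hsum : a + b = c + d) :
    GoodElt (Bs p m n) (Ps p m n) (Qs p m n) (uu p a b c d) where
  conjP := by
    rintro x ⟨hx, hx1, hx2⟩
    obtain ⟨k1, k2, k3, k4, k5, k6, k7, k8, k9⟩ := mem_Bmn_iff.1 hx
    have z1 : ∀ i j, j < i →
        ((uu p a b c d * x * (uu p a b c d)⁻¹ : (MG p)ˣ) : MG p).1 i j = 0 := by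
      intro i j hij; rw [conj_fst, hx1 _ _ hij]; simp
    have z2 : ∀ i j, j < i →
        ((uu p a b c d * x * (uu p a b c d)⁻¹ : (MG p)ˣ) : MG p).2 i j = 0 := by
      intro i j hij; rw [conj_snd, hx2 _ _ hij]; simp
    refine ⟨conj_mem_B (uu_mem hsum) hx ?_ ?_ ?_ ?_ ?_, z1, z2⟩
    · intro i j
      rcases lt_or_ge j i with hij | hij
      · rw [z1 _ _ hij]; simp
      · rw [conj_fst]; exact (conj_scale (tv_le hab hij)).trans (k4 _ _)
    · intro i j
      rcases lt_or_ge j i with hij | hij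
      · rw [z2 _ _ hij]; simp
      · rw [conj_snd]; exact (conj_scale (sv_le hcd hij)).trans (k5 _ _)
    · intro i j hij; rw [z1 _ _ hij]; simp
    · intro i j hij; rw [z2 _ _ hij]; simp
    · rw [conj_fst, mul_right_comm, mul_inv_cancel₀ (tv_ne a b 3), one_mul]
  conjQ := by
    rintro x ⟨hx, hx1, hx2⟩
    obtain ⟨k1, k2, k3, k4, k5, k6, k7, k8, k9⟩ := mem_Bmn_iff.1 hx
    have l1 : ∀ i j, ‖(((uu p a b c d)⁻¹ * x * (uu p a b c d) : (MG p)ˣ) : MG p).1 i j‖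
        ≤ ‖(x : MG p).1 i j‖ := by
      intro i j
      rw [conj_fst']
      rcases lt_or_ge i j with hij | hij
      · rw [hx1 _ _ hij]; simp
      · exact conj_scale' (tv_le hab hij)
    have l2 : ∀ i j, ‖(((uu p a b c d)⁻¹ * x * (uu p a b c d) : (MG p)ˣ) : MG p).2 i j‖
        ≤ ‖(x : MG p).2 i j‖ := by
      intro i j
      rw [conj_snd']
      rcases lt_or_ge i j with hij | hij
      · rw [hx2 _ _ hij]; simp
      · exact conj_scale' (sv_le hcd hij)
    have := conj_mem_B (g := (uu p a b c d)⁻¹) ((GQ p).inv_mem (uu_mem hsum)) hx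
    rw [inv_inv] at this
    refine this ?_ ?_ ?_ ?_ ?_
    · intro i j; exact (l1 i j).trans (k4 i j)
    · intro i j; exact (l2 i j).trans (k5 i j)
    · intro i j _; exact l1 i j
    · intro i j _; exact l2 i j
    · rw [conj_fst', mul_right_comm, inv_mul_cancel₀ (tv_ne a b 3), one_mul]
  inter := by
    rintro x ⟨hx, hx1, hx2⟩ h
    refine ⟨h, ?_, ?_⟩
    · intro i j hij; rw [conj_fst', hx1 _ _ hij]; simp
    · intro i j hij; rw [conj_snd', hx2 _ _ hij]; simp

lemma zmod_close {M : ℕ} {x y : ℚ_[p]} (hx : ‖x‖ ≤ 1) (hy : ‖y‖ ≤ 1)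
    (h : PadicInt.toZModPow M (⟨x, hx⟩ : ℤ_[p]) = PadicInt.toZModPow M (⟨y, hy⟩ : ℤ_[p])) :
    ‖y - x‖ ≤ (p : ℝ) ^ (-(M : ℤ)) := by
  obtain ⟨X, hX⟩ : ∃ X : ℤ_[p], X = ⟨x, hx⟩ := ⟨_, rfl⟩
  obtain ⟨Y, hY⟩ : ∃ Y : ℤ_[p], Y = ⟨y, hy⟩ := ⟨_, rfl⟩
  have hX' : (X : ℚ_[p]) = x := by rw [hX]
  have hY' : (Y : ℚ_[p]) = y := by rw [hY]
  rw [← hX, ← hY] at h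
  have h1 : PadicInt.toZModPow M (Y - X) = 0 := by
    rw [map_sub, h, sub_self]
  rw [← RingHom.mem_ker, PadicInt.ker_toZModPow, ← PadicInt.norm_le_pow_iff_mem_span_pow] at h1
  rw [PadicInt.norm_def, PadicInt.coe_sub, hX', hY'] at h1
  exact h1

lemma pow_bound (M e : ℕ) (he : e ≤ M) : ‖((p : ℚ_[p]) ^ e)⁻¹‖ ≤ (p : ℝ) ^ (M : ℤ) := by
  have hp : (1 : ℝ) ≤ p := by exact_mod_cast (Fact.out : p.Prime).one_lt.le
  rw [norm_inv, norm_pow, Padic.norm_p, inv_pow, inv_inv, zpow_natCast]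
  exact pow_le_pow_right₀ hp he

lemma pow_bound' (e : ℕ) : ‖(p : ℚ_[p]) ^ e‖ ≤ 1 := by
  rw [norm_pow]
  exact pow_le_one₀ (norm_nonneg _) Padic.norm_p_lt_one.le

lemma tv_bound (a b M : ℕ) (h : a + b ≤ M) (i : Fin 4) :
    ‖(tv p a b i)⁻¹‖ ≤ (p : ℝ) ^ (M : ℤ) ∧ ‖tv p a b i‖ ≤ 1 := by
  have h1 := pow_bound (p := p) M 0 (Nat.zero_le _)
  have h2 := pow_bound' (p := p) 0
  rw [pow_zero] at h1 h2
  fin_cases i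
  · exact ⟨pow_bound M _ h, pow_bound' _⟩
  · exact ⟨pow_bound M b (by omega), pow_bound' _⟩
  · exact ⟨pow_bound M a (by omega), pow_bound' _⟩
  · exact ⟨h1, h2⟩

lemma sv_bound (c d M : ℕ) (h : c + d ≤ M) (i : Fin 2) :
    ‖(sv p c d i)⁻¹‖ ≤ (p : ℝ) ^ (M : ℤ) ∧ ‖sv p c d i‖ ≤ 1 := by
  fin_cases i
  · exact ⟨pow_bound M d (by omega), pow_bound' _⟩
  · exact ⟨pow_bound M c (by omega), pow_bound' _⟩

lemma scale_bound {M : ℕ} {t s e : ℚ_[p]} (ht : ‖t⁻¹‖ ≤ (p : ℝ) ^ (M : ℤ)) (hs : ‖s‖ ≤ 1)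
    (he : ‖e‖ ≤ (p : ℝ) ^ (-(M : ℤ))) : ‖t⁻¹ * e * s‖ ≤ 1 := by
  have hp : (p : ℝ) ≠ 0 := by exact_mod_cast (Fact.out : p.Prime).ne_zero
  refine norm_mul_le_left ?_ hs
  rw [norm_mul]
  calc _ ≤ (p : ℝ) ^ (M : ℤ) * (p : ℝ) ^ (-(M : ℤ)) := by gcongr
    _ = 1 := by rw [← zpow_add₀ hp]; simp

lemma finite_index {m n a b c d : ℕ} (hsum : a + b = c + d) :
    (MulAut.conj (uu p a b c d) • Ps p m n).relIndex (Ps p m n) ≠ 0 := by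
  obtain ⟨M, hM⟩ : ∃ M, M = a + b := ⟨_, rfl⟩
  have : NeZero (p ^ M) := ⟨pow_ne_zero _ (Fact.out : p.Prime).ne_zero⟩
  have I1 : ∀ x : Ps p m n, ∀ i j, ‖((x : (MG p)ˣ) : MG p).1 i j‖ ≤ 1 :=
    fun x => (mem_Bmn_iff.1 x.2.1).2.2.2.1
  have I2 : ∀ x : Ps p m n, ∀ i j, ‖((x : (MG p)ˣ) : MG p).2 i j‖ ≤ 1 :=
    fun x => (mem_Bmn_iff.1 x.2.1).2.2.2.2.1
  let f : Ps p m n → (Fin 4 → Fin 4 → ZMod (p ^ M)) × (Fin 2 → Fin 2 → ZMod (p ^ M)) := fun x =>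
    (fun i j => PadicInt.toZModPow M (⟨((x : (MG p)ˣ) : MG p).1 i j, I1 x i j⟩ : ℤ_[p]),
     fun i j => PadicInt.toZModPow M (⟨((x : (MG p)ˣ) : MG p).2 i j, I2 x i j⟩ : ℤ_[p]))
  have key : ∀ x y, f x = f y → x⁻¹ * y ∈
      (MulAut.conj (uu p a b c d) • Ps p m n).subgroupOf (Ps p m n) := by
    intro x y hxy
    rw [Subgroup.mem_subgroupOf, mem_conj_iff]
    have E1 : ∀ i j, ‖((y : (MG p)ˣ) : MG p).1 i j - ((x : (MG p)ˣ) : MG p).1 i j‖ ≤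
        (p : ℝ) ^ (-(M : ℤ)) := fun i j =>
      zmod_close (I1 x i j) (I1 y i j) (congrFun (congrFun (congrArg Prod.fst hxy) i) j)
    have E2 : ∀ i j, ‖((y : (MG p)ˣ) : MG p).2 i j - ((x : (MG p)ˣ) : MG p).2 i j‖ ≤
        (p : ℝ) ^ (-(M : ℤ)) := fun i j =>
      zmod_close (I2 x i j) (I2 y i j) (congrFun (congrFun (congrArg Prod.snd hxy) i) j)
    obtain ⟨k, hk⟩ : ∃ k, k = x⁻¹ * y := ⟨_, rfl⟩
    rw [← hk]
    have K1 : ∀ i j, i ≠ j → ‖((k : (MG p)ˣ) : MG p).1 i j‖ ≤ (p : ℝ) ^ (-(M : ℤ)) := by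
      intro i j hij
      have e0 : (((x⁻¹ : Ps p m n) : (MG p)ˣ) : MG p).1 * ((x : (MG p)ˣ) : MG p).1 = 1 :=
        congrArg Prod.fst (Units.inv_mul (x : (MG p)ˣ))
      have e1 : ((k : (MG p)ˣ) : MG p).1 = 1 + (((x⁻¹ : Ps p m n) : (MG p)ˣ) : MG p).1 *
          (((y : (MG p)ˣ) : MG p).1 - ((x : (MG p)ˣ) : MG p).1) := by
        rw [Matrix.mul_sub, e0, hk]
        simp
      rw [e1, Matrix.add_apply, Matrix.one_apply_ne hij, zero_add]
      exact norm_mat_mul (r_nonneg M) (fun l => norm_mul_le_right (I1 x⁻¹ _ _) (E1 _ _))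
    have K2 : ∀ i j, i ≠ j → ‖((k : (MG p)ˣ) : MG p).2 i j‖ ≤ (p : ℝ) ^ (-(M : ℤ)) := by
      intro i j hij
      have e0 : (((x⁻¹ : Ps p m n) : (MG p)ˣ) : MG p).2 * ((x : (MG p)ˣ) : MG p).2 = 1 :=
        congrArg Prod.snd (Units.inv_mul (x : (MG p)ˣ))
      have e1 : ((k : (MG p)ˣ) : MG p).2 = 1 + (((x⁻¹ : Ps p m n) : (MG p)ˣ) : MG p).2 *
          (((y : (MG p)ˣ) : MG p).2 - ((x : (MG p)ˣ) : MG p).2) := by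
        rw [Matrix.mul_sub, e0, hk]
        simp
      rw [e1, Matrix.add_apply, Matrix.one_apply_ne hij, zero_add]
      exact norm_mat_mul (r_nonneg M) (fun l => norm_mul_le_right (I2 x⁻¹ _ _) (E2 _ _))
    obtain ⟨hkB, hk1, hk2⟩ := k.2
    have z1 : ∀ i j, j < i →
        (((uu p a b c d)⁻¹ * k * (uu p a b c d) : (MG p)ˣ) : MG p).1 i j = 0 := by
      intro i j hij; rw [conj_fst', hk1 _ _ hij]; simp
    have z2 : ∀ i j, j < i →
        (((uu p a b c d)⁻¹ * k * (uu p a b c d) : (MG p)ˣ) : MG p).2 i j = 0 := by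
      intro i j hij; rw [conj_snd', hk2 _ _ hij]; simp
    refine ⟨?_, z1, z2⟩
    have := conj_mem_B (g := (uu p a b c d)⁻¹) ((GQ p).inv_mem (uu_mem hsum)) hkB
    rw [inv_inv] at this
    refine this ?_ ?_ ?_ ?_ ?_
    · intro i j
      rw [conj_fst']
      by_cases hij : i = j
      · subst hij
        rw [mul_right_comm, inv_mul_cancel₀ (tv_ne a b i), one_mul]
        exact I1 k i i
      · exact scale_bound (tv_bound a b M hM.ge i).1 (tv_bound a b M hM.ge j).2 (K1 i j hij)
    · intro i j
      rw [conj_snd']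
      by_cases hij : i = j
      · subst hij
        rw [mul_right_comm, inv_mul_cancel₀ (sv_ne c d i), one_mul]
        exact I2 k i i
      · exact scale_bound (sv_bound c d M (by omega) i).1 (sv_bound c d M (by omega) j).2
          (K2 i j hij)
    · intro i j hij; rw [z1 _ _ hij]; simp
    · intro i j hij; rw [z2 _ _ hij]; simp
    · rw [conj_fst', mul_right_comm, inv_mul_cancel₀ (tv_ne a b 3), one_mul]
  have hfin : Finite (Ps p m n ⧸
      (MulAut.conj (uu p a b c d) • Ps p m n).subgroupOf (Ps p m n)) := by
    refine Finite.of_injective (fun q => f q.out) ?_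
    intro q q' h
    rw [← QuotientGroup.out_eq' q, ← QuotientGroup.out_eq' q']
    exact QuotientGroup.eq.2 (key _ _ h)
  exact Subgroup.index_ne_zero_of_finite

lemma image_Bs (m n : ℕ) : Units.coeHom (MG p) '' (Bs p m n : Set (MG p)ˣ) = Bmn p m n := by
  ext x
  constructor
  · rintro ⟨y, hy, rfl⟩
    exact hy
  · intro hx
    obtain ⟨k1, k2, k3, -⟩ := mem_Bmn_iff.1 hx
    obtain ⟨u, hu⟩ := exists_unit x.1 x.2 (by intro h; rw [h] at k2; simp at k2)
      (by intro h; rw [h] at k3; simp at k3)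
    refine ⟨u, ?_, hu⟩
    show (u : MG p) ∈ Bmn p m n
    rw [hu]; exact hx

lemma lcosets_image (B S : Set (MG p)ˣ) :
    lcosets p (Units.coeHom (MG p) '' B) (Units.coeHom (MG p) '' S) =
      (Set.image (Units.coeHom (MG p))) '' ((fun g => ({g} : Set (MG p)ˣ) * B) '' S) := by
  unfold lcosets
  rw [Set.image_image, Set.image_image]
  refine Set.image_congr (fun g _ => ?_)
  rw [Set.image_mul, Set.image_singleton]

lemma coe_inj : Function.Injective (Units.coeHom (MG p)) := Units.val_injective

end Concrete

/-- `B_{m,n}·u₁·B_{m,n}·u₂·B_{m,n} = B_{m,n}·u₁u₂·B_{m,n}`, and the (finite) number of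
left `B_{m,n}`-cosets in `B_{m,n}·u₁u₂·B_{m,n}` is the product of those for `u₁` and
`u₂`. -/
theorem stmt15 (p : ℕ) [Fact p.Prime] (m n : ℕ) (hn : 1 ≤ n)
    (a₁ b₁ c₁ d₁ a₂ b₂ c₂ d₂ : ℕ)
    (hab₁ : a₁ ≤ b₁) (hcd₁ : c₁ ≤ d₁) (hsum₁ : a₁ + b₁ = c₁ + d₁)
    (hab₂ : a₂ ≤ b₂) (hcd₂ : c₂ ≤ d₂) (hsum₂ : a₂ + b₂ = c₂ + d₂) :
    (Bmn p m n * {vElt p a₁ b₁ c₁ d₁} * Bmn p m n * {vElt p a₂ b₂ c₂ d₂} * Bmn p m n =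
      Bmn p m n * {vElt p a₁ b₁ c₁ d₁ * vElt p a₂ b₂ c₂ d₂} * Bmn p m n) ∧
    (lcosets p (Bmn p m n)
      (Bmn p m n * {vElt p a₁ b₁ c₁ d₁ * vElt p a₂ b₂ c₂ d₂} * Bmn p m n)).Finite ∧
    (lcosets p (Bmn p m n)
        (Bmn p m n * {vElt p a₁ b₁ c₁ d₁ * vElt p a₂ b₂ c₂ d₂} * Bmn p m n)).ncard =
      (lcosets p (Bmn p m n) (Bmn p m n * {vElt p a₁ b₁ c₁ d₁} * Bmn p m n)).ncard *
        (lcosets p (Bmn p m n) (Bmn p m n * {vElt p a₂ b₂ c₂ d₂} * Bmn p m n)).ncard := by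

  have H := abstract_main (Bs p m n) (Ps p m n) (Qs p m n) Ps_le (factor hn)
    (good (p := p) hab₁ hcd₁ hsum₁) (good (p := p) hab₂ hcd₂ hsum₂)
    (by
      rw [uu_mul]
      exact good (by omega) (by omega) (by omega))
    (by
      rw [uu_mul]
      exact finite_index (by omega))
  obtain ⟨H1, H2, H3⟩ := H
  have e1 : ({vElt p a₁ b₁ c₁ d₁} : Set (MG p)) = Units.coeHom (MG p) '' {uu p a₁ b₁ c₁ d₁} := by
    rw [Set.image_singleton]; rfl
  have e2 : ({vElt p a₂ b₂ c₂ d₂} : Set (MG p)) = Units.coeHom (MG p) '' {uu p a₂ b₂ c₂ d₂} := by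
    rw [Set.image_singleton]; rfl
  have e3 : ({vElt p a₁ b₁ c₁ d₁ * vElt p a₂ b₂ c₂ d₂} : Set (MG p)) =
      Units.coeHom (MG p) '' {uu p a₁ b₁ c₁ d₁ * uu p a₂ b₂ c₂ d₂} := by
    rw [Set.image_singleton]; rfl
  rw [e1, e2, e3, ← image_Bs]
  simp only [← Set.image_mul, lcosets_image]
  refine ⟨by rw [H1], H2.image _, ?_⟩
  have hi := (coe_inj (p := p)).image_injective
  rw [Set.ncard_image_of_injective _ hi, Set.ncard_image_of_injective _ hi,
    Set.ncard_image_of_injective _ hi]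
  exact H3
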